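/- arXiv:0907.4470 — 4 statements merged into one kernel-verified Lean document; each statement's English description precedes it below -/
import Mathlib

section
/- Let p ⊆ V be a nondegenerate subspace of dimension k, let 1 ≤ m ≤ k, and let t₁, t₂ : V → V be tangent vectors at p, with t₁* the adjoint of t₁. If S : ⋀^m p → ⋀^m p is a linear map satisfying ⟨S α, β⟩ = ⟨D_{t₂} α, D_{t₁} β⟩ for all α, β ∈ ⋀^m p (pairings taken in the induced hermitian form on ⋀^m V, with ⋀^m p regarded as the subspace of ⋀^m V spanned by wedges of vectors of p), then the trace of S equals (k−1 choose m−1) times the trace of the endomorphism t₁*∘t₂ restricted to p. (This is the statement that the m-Plücker embedding is an hermitian embedding after rescaling the metric of Gr⁰(k,V) by the factor (k−1 choose m−1).) -/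
/-- The wedge `v 0 ∧ ⋯ ∧ v (m-1)` as an element of the `m`-th exterior power `⋀[R]^m V`. -/
noncomputable def wedge (R : Type*) [CommRing R] {V : Type*} [AddCommGroup V] [Module R V]
    (m : ℕ) (v : Fin m → V) : ⋀[R]^m V :=
  ⟨ExteriorAlgebra.ιMulti R m v,
    ExteriorAlgebra.ιMulti_range R m (Set.mem_range_self v)⟩

/-- `⋀^m p` regarded as the subspace of `⋀^m V` spanned by the wedges of vectors of `p`. -/
noncomputable def wedgeSpan (R : Type*) [CommRing R] {V : Type*} [AddCommGroup V] [Module R V]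
    (p : Submodule R V) (m : ℕ) : Submodule R (⋀[R]^m V) :=
  Submodule.span R {x : ⋀[R]^m V | ∃ v : Fin m → V, (∀ i, v i ∈ p) ∧ x = wedge R m v}

/-!
Let `r = t₁* ∘ t₂` on `p`. Since `t₁` and `t₂` map `p` into `p^⊥`, Laplace expansion of the Gram
determinants shows `⟨D_{t₂} α, D_{t₁} β⟩ = ⟨D_r α, β⟩` on `⋀^m p`, and nondegeneracy of the induced
pairing there forces `S = D_r`. In the basis of `⋀^m p` attached to a basis of `p`, the diagonal
entry of `D_r` at an `m`-subset `s` is the sum of the diagonal entries of `r` indexed by `s`; every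
index lies in `(k-1).choose (m-1)` of these subsets.
-/

lemma sum_powersetCard_sum_mem {ι A : Type*} [AddCommMonoid A] (t : Finset ι)
    {m : ℕ} (hm : 1 ≤ m) (f : ι → A) :
    ∑ s ∈ t.powersetCard m, ∑ x ∈ s, f x = (t.card - 1).choose (m - 1) • ∑ x ∈ t, f x := by
  classical
  have swap : ∑ s ∈ t.powersetCard m, ∑ x ∈ s, f x
      = ∑ x ∈ t, ∑ s ∈ t.powersetCard m with x ∈ s, f x :=
    Finset.sum_comm' fun s x ↦ by
      simp only [Finset.mem_filter, Finset.mem_powersetCard]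
      exact ⟨fun h ↦ ⟨h, h.1.1 h.2⟩, And.left⟩
  rw [swap, Finset.smul_sum]
  refine Finset.sum_congr rfl fun x hx ↦ ?_
  have card_eq : {s ∈ t.powersetCard m | x ∈ s}.card = (t.card - 1).choose (m - 1) := by
    simpa using Finset.card_filter_powersetCard_subset {x} t m (by simpa) (by simpa)
  rw [Finset.sum_const, card_eq]

lemma sum_ofFinEmbEquiv_symm {ι A : Type*} [LinearOrder ι] [AddCommMonoid A] {m : ℕ}
    (s : Set.powersetCard ι m) (f : ι → A) :
    ∑ i, f (Set.powersetCard.ofFinEmbEquiv.symm s i) = ∑ x ∈ s.val, f x := by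
  have map_eq : Finset.univ.map (Set.powersetCard.ofFinEmbEquiv.symm s).toEmbedding = s.val := by
    ext x
    simpa [Set.powersetCard.mem_coe_iff] using
      Set.powersetCard.mem_range_ofFinEmbEquiv_symm_iff_mem s x
  rw [← map_eq, Finset.sum_map]
  rfl

lemma sum_powersetCard_sum_ofFinEmbEquiv_symm {ι A : Type*} [LinearOrder ι] [Fintype ι]
    [AddCommMonoid A] {m : ℕ} (hm : 1 ≤ m) (f : ι → A) :
    ∑ s : Set.powersetCard ι m, ∑ i, f (Set.powersetCard.ofFinEmbEquiv.symm s i)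
      = (Fintype.card ι - 1).choose (m - 1) • ∑ x, f x := by
  simp only [sum_ofFinEmbEquiv_symm]
  rw [← Finset.card_univ, ← sum_powersetCard_sum_mem Finset.univ hm]
  exact (Finset.sum_subtype _ (by simp [Set.powersetCard.mem_iff])
    fun s ↦ ∑ x ∈ s, f x).symm

lemma det_updateRow_updateCol_zero_single {R n : Type*} [CommRing R] [Fintype n] [DecidableEq n]
    (A : Matrix n n R) (i j : n) (c : R) :
    ((A.updateCol j 0).updateRow i (Pi.single j c)).det = (A.updateRow i (Pi.single j c)).det := by
  have single_eq : Pi.single j c = c • (Pi.single j 1 : n → R) := by simp [← Pi.single_smul]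
  rw [single_eq, Matrix.det_updateRow_smul, Matrix.det_updateRow_smul]
  congr 1
  symm
  -- The new row `i` has its only entry in column `j`, so multiples of it clear that column.
  refine Matrix.det_eq_of_forall_row_eq_smul_add_const (Function.update (A · j) i 0) i (by simp)
    fun a b ↦ ?_
  rcases eq_or_ne a i with rfl | ha <;> rcases eq_or_ne b j with rfl | hb <;> simp [*]

lemma sum_det_updateRow_updateCol_zero_single {R n : Type*} [CommRing R] [Fintype n]
    [DecidableEq n] (A : Matrix n n R) (i : n) (c : n → R) :
    ∑ j, ((A.updateCol j 0).updateRow i (Pi.single j (c j))).det = (A.updateRow i c).det := by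
  simp only [det_updateRow_updateCol_zero_single]
  simp only [← Matrix.cramer_transpose_apply]
  rw [← Finset.sum_apply, ← map_sum, Finset.univ_sum_single]

lemma map_wedge {R M N : Type*} [CommRing R] [AddCommGroup M] [Module R M] [AddCommGroup N]
    [Module R N] {m : ℕ} (f : M →ₗ[R] N) (v : Fin m → M) :
    exteriorPower.map m f (wedge R m v) = wedge R m (f ∘ v) :=
  exteriorPower.map_apply_ιMulti f v

lemma range_map_subtype_eq_wedgeSpan {R M : Type*} [CommRing R] [AddCommGroup M] [Module R M]
    (p : Submodule R M) (m : ℕ) :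
    LinearMap.range (exteriorPower.map m p.subtype) = wedgeSpan R p m := by
  rw [LinearMap.range_eq_map, ← exteriorPower.ιMulti_span, Submodule.map_span, wedgeSpan,
    ← Set.range_comp]
  congr 1
  ext x
  constructor
  · rintro ⟨v, rfl⟩
    exact ⟨fun i ↦ v i, fun i ↦ (v i).2, exteriorPower.map_apply_ιMulti _ _⟩
  · rintro ⟨v, hv, rfl⟩
    exact ⟨fun i ↦ ⟨v i, hv i⟩, exteriorPower.map_apply_ιMulti _ _⟩

section Derivation

variable {R M : Type*} [CommRing R] [AddCommGroup M] [Module R M] {m : ℕ}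

/-- `D` is the endomorphism of `⋀^m M` induced by `t` through the Leibniz rule, i.e. the map
`D_t`. It is a predicate, not a construction: `D` is determined by its values on wedges. -/
def IsWedgeDerivation (t : M →ₗ[R] M) (D : ⋀[R]^m M →ₗ[R] ⋀[R]^m M) : Prop :=
  ∀ v : Fin m → M, D (wedge R m v) = ∑ i, wedge R m (Function.update v i (t (v i)))

lemma basis_repr_wedge_update {ι : Type*} [LinearOrder ι] (b : Module.Basis ι R M)
    (s : Set.powersetCard ι m) (i : Fin m) (x : M) :
    (b.exteriorPower m).repr
        (wedge R m (Function.update (b ∘ Set.powersetCard.ofFinEmbEquiv.symm s) i x)) s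
      = b.repr x (Set.powersetCard.ofFinEmbEquiv.symm s i) := by
  set a := Set.powersetCard.ofFinEmbEquiv.symm s with ha
  have matrix_eq : (Matrix.of fun j l ↦ b.coord (a l) (Function.update (b ∘ a) i x j))
      = (1 : Matrix (Fin m) (Fin m) R).updateRow i fun l ↦ b.repr x (a l) := by
    ext j l
    rcases eq_or_ne j i with rfl | hj
    · simp
    · simp [hj, Finsupp.single_apply, Matrix.one_apply]
  rw [exteriorPower.basis_repr_apply]
  refine (exteriorPower.ιMultiDual_apply_ιMulti R m b s _).trans ?_
  rw [← ha, matrix_eq, ← Matrix.cramer_transpose_apply, Matrix.transpose_one, Matrix.cramer_one,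
    Module.End.one_apply]

theorem IsWedgeDerivation.trace_eq {ι : Type*} [LinearOrder ι] [Fintype ι]
    (b : Module.Basis ι R M) (hm : 1 ≤ m) {t : M →ₗ[R] M} {D : ⋀[R]^m M →ₗ[R] ⋀[R]^m M}
    (hD : IsWedgeDerivation t D) :
    LinearMap.trace R (⋀[R]^m M) D
      = (Fintype.card ι - 1).choose (m - 1) * LinearMap.trace R M t := by
  have diag_entry (s : Set.powersetCard ι m) :
      (b.exteriorPower m).repr (D (b.exteriorPower m s)) s
        = ∑ i, b.repr (t (b (Set.powersetCard.ofFinEmbEquiv.symm s i)))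
            (Set.powersetCard.ofFinEmbEquiv.symm s i) := by
    have basis_eq : b.exteriorPower m s = wedge R m (b ∘ Set.powersetCard.ofFinEmbEquiv.symm s) :=
      exteriorPower.basis_apply R m b s
    rw [basis_eq, hD, map_sum, Finsupp.finsetSum_apply]
    simp only [basis_repr_wedge_update, Function.comp_apply]
  simp only [LinearMap.trace_eq_matrix_trace R (b.exteriorPower m),
    LinearMap.trace_eq_matrix_trace R b, Matrix.trace, Matrix.diag_apply,
    LinearMap.toMatrix_apply, diag_entry]
  rw [sum_powersetCard_sum_ofFinEmbEquiv_symm hm fun x ↦ b.repr (t (b x)) x, nsmul_eq_mul]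

end Derivation

section GramPairing

variable {R M N : Type*} [CommRing R] {σ : R →+* R} [AddCommGroup M] [Module R M]
  [AddCommGroup N] [Module R N] {m : ℕ}

/-- `Φ` is the pairing of `m`-th exterior powers induced by the sesquilinear pairing `φ`: on
decomposable elements it is the Gram determinant. -/
def IsGramPairing (φ : M →ₗ[R] N →ₛₗ[σ] R) (Φ : ⋀[R]^m M →ₗ[R] ⋀[R]^m N →ₛₗ[σ] R) : Prop :=
  ∀ v w, Φ (wedge R m v) (wedge R m w) = (Matrix.of fun i j ↦ φ (v i) (w j)).det

lemma of_update_update_eq_updateRow_updateCol (φ : M →ₗ[R] N →ₛₗ[σ] R) {v : Fin m → M}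
    {w : Fin m → N} {x : M} {y : N} (hx : ∀ j, φ x (w j) = 0) (hy : ∀ i, φ (v i) y = 0)
    (i j : Fin m) :
    (Matrix.of fun a b ↦ φ (Function.update v i x a) (Function.update w j y b))
      = ((Matrix.of fun a b ↦ φ (v a) (w b)).updateCol j 0).updateRow i
          (Pi.single j (φ x y)) := by
  ext a b
  rcases eq_or_ne a i with rfl | ha <;> rcases eq_or_ne b j with rfl | hb <;> simp [*]

/-- Orthogonality leaves a single nonzero entry in the row and column modified by `t` and `u`,
so summing over the column is a Laplace expansion. -/
theorem IsGramPairing.apply_derivation_derivation {φ : M →ₗ[R] N →ₛₗ[σ] R}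
    {Φ : ⋀[R]^m M →ₗ[R] ⋀[R]^m N →ₛₗ[σ] R} (hΦ : IsGramPairing φ Φ)
    {t u' : M →ₗ[R] M} {u : N →ₗ[R] N} (hadj : ∀ x y, φ x (u y) = φ (u' x) y)
    {D : ⋀[R]^m M →ₗ[R] ⋀[R]^m M} {E : ⋀[R]^m N →ₗ[R] ⋀[R]^m N}
    (hD : IsWedgeDerivation t D) (hE : IsWedgeDerivation u E) {v : Fin m → M} {w : Fin m → N}
    (ht : ∀ i j, φ (t (v i)) (w j) = 0) (hu : ∀ i j, φ (v i) (u (w j)) = 0) :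
    Φ (D (wedge R m v)) (E (wedge R m w))
      = ∑ i, Φ (wedge R m (Function.update v i (u' (t (v i))))) (wedge R m w) := by
  rw [hD, hE, map_sum Φ, LinearMap.sum_apply]
  refine Finset.sum_congr rfl fun i _ ↦ ?_
  have updateRow_eq : (Matrix.of fun a b ↦ φ (Function.update v i (u' (t (v i))) a) (w b))
      = (Matrix.of fun a b ↦ φ (v a) (w b)).updateRow i fun j ↦ φ (t (v i)) (u (w j)) := by
    ext a b
    rcases eq_or_ne a i with rfl | ha <;> simp [*]
  rw [map_sum, hΦ, updateRow_eq, ← sum_det_updateRow_updateCol_zero_single]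
  refine Finset.sum_congr rfl fun j _ ↦ ?_
  rw [hΦ, of_update_update_eq_updateRow_updateCol φ (ht i) (hu · j)]

lemma IsGramPairing.comp_map {M' N' : Type*} [AddCommGroup M'] [Module R M'] [AddCommGroup N']
    [Module R N'] {φ : M →ₗ[R] N →ₛₗ[σ] R} {Φ : ⋀[R]^m M →ₗ[R] ⋀[R]^m N →ₛₗ[σ] R}
    (hΦ : IsGramPairing φ Φ) (f : M' →ₗ[R] M) (g : N' →ₗ[R] N) :
    IsGramPairing ((φ ∘ₗ f).compl₂ g)
      ((Φ ∘ₗ exteriorPower.map m f).compl₂ (exteriorPower.map m g)) := by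
  intro v w
  simp only [LinearMap.compl₂_apply, LinearMap.comp_apply, map_wedge, hΦ _ _, Function.comp_apply]

end GramPairing

lemma flip_surjective_of_separatingLeft {K V R W : Type*} [Field K] [AddCommGroup V] [Module K V]
    [FiniteDimensional K V] [CommSemiring R] [AddCommMonoid W] [Module R W] {σ : R →+* K}
    [RingHomSurjective σ] {φ : V →ₗ[K] W →ₛₗ[σ] K} (hφ : φ.SeparatingLeft) :
    Function.Surjective φ.flip := by
  have coannihilator_eq_bot : (LinearMap.range φ.flip).dualCoannihilator = ⊥ :=
    (Submodule.eq_bot_iff _).mpr fun x hx ↦ hφ x fun y ↦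
      (Submodule.mem_dualCoannihilator x).mp hx _ (LinearMap.mem_range_self φ.flip y)
  rw [← LinearMap.range_eq_top, ← Subspace.dualCoannihilator_dualAnnihilator_eq
    (W := LinearMap.range φ.flip), coannihilator_eq_bot, Submodule.dualAnnihilator_bot]

section Field

variable {K V : Type*} [Field K] {σ : K →+* K} [RingHomSurjective σ] [AddCommGroup V]
  [Module K V] {m : ℕ}

theorem IsGramPairing.eq_of_forall_apply_wedge {W : Type*} [AddCommGroup W] [Module K W]
    [FiniteDimensional K V] {φ : V →ₗ[K] W →ₛₗ[σ] K}
    {Φ : ⋀[K]^m V →ₗ[K] ⋀[K]^m W →ₛₗ[σ] K} (hΦ : IsGramPairing φ Φ) (hφ : φ.SeparatingLeft)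
    {x y : ⋀[K]^m V} (hxy : ∀ w, Φ x (wedge K m w) = Φ y (wedge K m w)) : x = y := by
  let b := Module.finBasis K V
  choose dual hdual using fun i ↦ flip_surjective_of_separatingLeft hφ (b.coord i)
  refine (b.exteriorPower m).ext_elem_iff.mpr fun s ↦ ?_
  have pairing_eq : Φ.flip (wedge K m (dual ∘ Set.powersetCard.ofFinEmbEquiv.symm s))
      = exteriorPower.ιMultiDual K m b s := by
    ext v
    refine (hΦ v _).trans (.trans ?_ (exteriorPower.ιMultiDual_apply_ιMulti K m b s v).symm)
    simp only [← hdual, LinearMap.flip_apply, Function.comp_apply]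
  rw [exteriorPower.basis_repr_apply, exteriorPower.basis_repr_apply, ← pairing_eq,
    LinearMap.flip_apply, LinearMap.flip_apply, hxy]

/-- The identification of the abstract exterior power `⋀^m p` with the subspace `wedgeSpan K p m`
of `⋀^m V`, induced by the inclusion of `p` in `V`. -/
noncomputable def wedgeSpanEquiv (p : Submodule K V) (m : ℕ) :
    ⋀[K]^m p ≃ₗ[K] wedgeSpan K p m :=
  (LinearEquiv.ofInjective (exteriorPower.map m p.subtype)
    (exteriorPower.map_injective_field p.subtype_injective)).trans
    (LinearEquiv.ofEq _ _ (range_map_subtype_eq_wedgeSpan p m))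

lemma coe_wedgeSpanEquiv (p : Submodule K V) (x : ⋀[K]^m p) :
    (wedgeSpanEquiv p m x : ⋀[K]^m V) = exteriorPower.map m p.subtype x :=
  rfl

end Field

theorem statement9_general {K : Type*} [Field K] {σ : K →+* K} [RingHomSurjective σ]
    {V : Type*} [AddCommGroup V] [Module K V]
    (φ : V →ₗ[K] V →ₛₗ[σ] K)
    (p : Submodule K V) [FiniteDimensional K p]
    (hp : (φ.domRestrict₁₂ p p).SeparatingLeft)
    (m : ℕ) (hm : 1 ≤ m)
    (Φ : ⋀[K]^m V →ₗ[K] ⋀[K]^m V →ₛₗ[σ] K) (hΦ : IsGramPairing φ Φ)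
    (t₁ t₂ t₁s : V →ₗ[K] V)
    (ht₁ : ∀ x ∈ p, ∀ y ∈ p, φ x (t₁ y) = 0)
    (ht₂ : ∀ x ∈ p, ∀ y ∈ p, φ (t₂ x) y = 0)
    (hadj : ∀ x y : V, φ x (t₁ y) = φ (t₁s x) y)
    (D₁ D₂ : ⋀[K]^m V →ₗ[K] ⋀[K]^m V)
    (hD₁ : IsWedgeDerivation t₁ D₁) (hD₂ : IsWedgeDerivation t₂ D₂)
    (S : wedgeSpan K p m →ₗ[K] wedgeSpan K p m)
    (hS : ∀ α β : wedgeSpan K p m,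
      Φ (S α : ⋀[K]^m V) (β : ⋀[K]^m V) = Φ (D₂ (α : ⋀[K]^m V)) (D₁ (β : ⋀[K]^m V)))
    (r : p →ₗ[K] p) (hr : ∀ x : p, (r x : V) = t₁s (t₂ (x : V))) :
    LinearMap.trace K (wedgeSpan K p m) S =
      ((Module.finrank K p - 1).choose (m - 1) : K) * LinearMap.trace K p r := by
  let e := wedgeSpanEquiv p m
  have conj_derivation : IsWedgeDerivation r (e.symm.conj S) := by
    intro v
    refine (hΦ.comp_map p.subtype p.subtype).eq_of_forall_apply_wedge hp fun w ↦ ?_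
    have coe_update (i : Fin m) : p.subtype ∘ Function.update v i (r (v i))
        = Function.update (p.subtype ∘ v) i (t₁s (t₂ ((p.subtype ∘ v) i))) := by
      rw [Function.comp_update, Submodule.subtype_apply, hr, Function.comp_apply,
        Submodule.subtype_apply]
    have coe_conj : exteriorPower.map m p.subtype (e.symm.conj S (wedge K m v))
        = (S (e (wedge K m v)) : ⋀[K]^m V) := by
      rw [← coe_wedgeSpanEquiv, LinearEquiv.conj_apply_apply, LinearEquiv.symm_symm,
        LinearEquiv.apply_symm_apply]
    have pairing_eq := hS (e (wedge K m v)) (e (wedge K m w))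
    simp only [e, coe_wedgeSpanEquiv, map_wedge] at pairing_eq
    simp only [LinearMap.compl₂_apply, LinearMap.comp_apply, coe_conj, map_sum,
      LinearMap.sum_apply, map_wedge, coe_update]
    exact pairing_eq.trans <| hΦ.apply_derivation_derivation hadj hD₂ hD₁
      (fun i j ↦ ht₂ _ (v i).2 _ (w j).2) fun i j ↦ ht₁ _ (v i).2 _ (w j).2
  calc LinearMap.trace K (wedgeSpan K p m) S
      = LinearMap.trace K (⋀[K]^m p) (e.symm.conj S) :=
        (LinearMap.trace_conj' (R := K) (M := wedgeSpan K p m) (N := ⋀[K]^m p) S e.symm).symm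
    _ = (Module.finrank K p - 1).choose (m - 1) * LinearMap.trace K p r := by
      rw [conj_derivation.trace_eq (Module.finBasis K p) hm, Fintype.card_fin]

/-- the `m`-Plücker embedding is an hermitian embedding after rescaling the
metric by `(k−1).choose (m−1)`: if `p` is nondegenerate of dimension `k`, `1 ≤ m ≤ k`,
`t₁, t₂` are tangent vectors at `p` and `S : ⋀^m p → ⋀^m p` satisfies
`⟨S α, β⟩ = ⟨D_{t₂} α, D_{t₁} β⟩` for all `α, β ∈ ⋀^m p`, then
`tr S = (k−1).choose (m−1) · tr (t₁* ∘ t₂ restricted to p)`. -/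
theorem statement9 {𝕜 : Type*} [RCLike 𝕜] {V : Type*} [AddCommGroup V] [Module 𝕜 V]
    [FiniteDimensional 𝕜 V]
    (φ : V →ₗ[𝕜] V →ₛₗ[starRingEnd 𝕜] 𝕜)
    (hherm : ∀ x y : V, φ x y = starRingEnd 𝕜 (φ y x))
    (hnd : ∀ x : V, (∀ y : V, φ x y = 0) → x = 0)
    (p : Submodule 𝕜 V)
    (hpnd : ∀ x ∈ p, (∀ y ∈ p, φ x y = 0) → x = 0)
    (k : ℕ) (hk : Module.finrank 𝕜 p = k)
    (m : ℕ) (hm1 : 1 ≤ m) (hmk : m ≤ k)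
    (Φ : ⋀[𝕜]^m V →ₗ[𝕜] ⋀[𝕜]^m V →ₛₗ[starRingEnd 𝕜] 𝕜)
    (hΦ : ∀ v w : Fin m → V,
      Φ (wedge 𝕜 m v) (wedge 𝕜 m w) = (Matrix.of fun i j => φ (v i) (w j)).det)
    (t₁ t₂ t₁s : V →ₗ[𝕜] V)
    -- `t₁` and `t₂` are tangent vectors at `p`: they map `p` into `p^⊥` and kill `p^⊥`
    (ht₁p : ∀ x ∈ p, ∀ y ∈ p, φ (t₁ x) y = 0)
    (ht₁perp : ∀ x : V, (∀ y ∈ p, φ x y = 0) → t₁ x = 0)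
    (ht₂p : ∀ x ∈ p, ∀ y ∈ p, φ (t₂ x) y = 0)
    (ht₂perp : ∀ x : V, (∀ y ∈ p, φ x y = 0) → t₂ x = 0)
    (hadj₁ : ∀ v w : V, φ (t₁ v) w = φ v (t₁s w))
    (Dt₁ Dt₂ : ⋀[𝕜]^m V →ₗ[𝕜] ⋀[𝕜]^m V)
    (hDt₁ : ∀ v : Fin m → V,
      Dt₁ (wedge 𝕜 m v) = ∑ i, wedge 𝕜 m (Function.update v i (t₁ (v i))))
    (hDt₂ : ∀ v : Fin m → V,
      Dt₂ (wedge 𝕜 m v) = ∑ i, wedge 𝕜 m (Function.update v i (t₂ (v i))))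
    (S : wedgeSpan 𝕜 p m →ₗ[𝕜] wedgeSpan 𝕜 p m)
    (hS : ∀ α β : wedgeSpan 𝕜 p m,
      Φ (S α : ⋀[𝕜]^m V) (β : ⋀[𝕜]^m V) = Φ (Dt₂ (α : ⋀[𝕜]^m V)) (Dt₁ (β : ⋀[𝕜]^m V)))
    -- `r` is the endomorphism of `p` obtained by restricting `t₁* ∘ t₂` to `p`
    (r : p →ₗ[𝕜] p) (hr : ∀ x : p, (r x : V) = t₁s (t₂ (x : V))) :
    LinearMap.trace 𝕜 (wedgeSpan 𝕜 p m) S =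
      ((k - 1).choose (m - 1) : 𝕜) * LinearMap.trace 𝕜 p r := by
  subst hk
  exact statement9_general φ p
    (fun x hx ↦ Subtype.ext (hpnd x x.2 fun y hy ↦ hx ⟨y, hy⟩)) m hm1 Φ hΦ t₁ t₂ t₁s
    (fun x hx y hy ↦ by rw [hherm, ht₁p y hy x hx, map_zero]) ht₂p
    (fun x y ↦ by rw [hherm, hadj₁, ← hherm]) Dt₁ Dt₂ hDt₁ hDt₂ S hS r hr
end

section
/- Let p ⊆ V be a nondegenerate subspace and let w, t, t₁, t₂ : V → V be tangent vectors at p, with t₁* the adjoint of t₁. Then for all p₁,…,p_m, p'₁,…,p'_m ∈ p one has ⟨B(t, t₁*∘t₂)(p₁∧⋯∧p_m) + B(t₂, t₁*∘t)(p₁∧⋯∧p_m), D_w(p'₁∧⋯∧p'_m)⟩ = ⟨B(t₂, t)(p₁∧⋯∧p_m), B(t₁, w)(p'₁∧⋯∧p'_m)⟩, pairings taken in the induced hermitian form on ⋀^m V. (This is the simplified form of the Gauss equation for the m-Plücker embedding: (E^m w)* B(t, t₁*t₂) + (E^m w)* B(t₂, t₁*t) = (B(t₁,w))* B(t₂,t).)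 -/
/-!
A pairing of the given kind is a sum of Gram determinants in which two rows have been replaced
(by `B`) and one or two columns (by `D` or `B`). Choosing two rows of a determinant amounts to
choosing two columns, so the row sum is a mixed determinant, taken relative to the Gram matrix
whose columns have already been replaced. A tangent vector sends `p` to `p^⊥`, so the rows it
contributes vanish outside the replaced columns and most terms of the mixed determinant drop out.
With `G = ⟨pᵢ, p'ⱼ⟩`, both sides of the Gauss equation reduce to
`mixedDet G ⟨t pᵢ, w p'ⱼ⟩ ⟨t₂ pᵢ, t₁ p'ⱼ⟩ + mixedDet G ⟨t₂ pᵢ, w p'ⱼ⟩ ⟨t pᵢ, t₁ p'ⱼ⟩`.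
-/

open Finset Matrix

theorem sum_offDiag_univ_eq_sum_ite {n M : Type*} [Fintype n] [DecidableEq n] [AddCommMonoid M]
    (f : n → n → M) :
    ∑ kl ∈ univ.offDiag, f kl.1 kl.2 = ∑ k, ∑ l, if k = l then 0 else f k l := by
  have offDiag_eq : (univ : Finset n).offDiag = univ.filter fun kl => ¬kl.1 = kl.2 := by
    ext; simp
  simp only [offDiag_eq, sum_filter, ite_not, Fintype.sum_prod_type]

section MixedDet

variable {n R : Type*} [Fintype n] [DecidableEq n] [CommRing R]

/-- The mixed determinant of `A` and `C` relative to `G`: the coefficient of `x * y` in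
`det (G + x • A + y • C)`, written as a sum over the columns taken from `A` and from `C`. -/
def mixedDet (G A C : Matrix n n R) : R :=
  ∑ kl ∈ univ.offDiag, ((G.updateCol kl.1 (A.col kl.1)).updateCol kl.2 (C.col kl.2)).det

theorem mixedDet_comm (G A C : Matrix n n R) : mixedDet G A C = mixedDet G C A := by
  refine sum_equiv (Equiv.prodComm n n) (by simp [eq_comm]) fun kl hkl => ?_
  rw [Equiv.prodComm_apply, Prod.fst_swap, Prod.snd_swap,
    updateCol_comm _ (mem_offDiag.mp hkl).2.2]

-- In the Leibniz expansion, `σ` turns a choice of two columns into a choice of two rows.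
theorem sum_det_updateRow_updateRow (G A C : Matrix n n R) :
    ∑ ij ∈ univ.offDiag, ((G.updateRow ij.1 (A.row ij.1)).updateRow ij.2 (C.row ij.2)).det =
      mixedDet G A C := by
  simp only [mixedDet, det_apply', sum_comm (s := univ.offDiag)]
  refine sum_congr rfl fun σ _ => (sum_equiv (σ.prodCongr σ) (by simp) fun kl _ => ?_).symm
  congr 1
  refine prod_congr rfl fun x _ => ?_
  simp only [updateRow_apply, updateCol_apply, row_apply, col_apply, Equiv.prodCongr_apply,
    Prod.map_fst, Prod.map_snd, σ.apply_eq_iff_eq]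
  split_ifs <;> simp only [*]

theorem det_updateCol_zero (G : Matrix n n R) (k : n) : (G.updateCol k 0).det = 0 :=
  det_eq_zero_of_column_eq_zero k fun _ => by simp only [updateCol_self, Pi.zero_apply]

theorem mixedDet_eq_sum_of_col_eq_zero {G A C : Matrix n n R} {k : n}
    (hA : ∀ a ≠ k, A.col a = 0) :
    mixedDet G A C =
      ∑ l, if k = l then 0 else ((G.updateCol k (A.col k)).updateCol l (C.col l)).det := by
  rw [mixedDet, sum_offDiag_univ_eq_sum_ite
    fun k l => ((G.updateCol k (A.col k)).updateCol l (C.col l)).det]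
  refine Fintype.sum_eq_single k fun a hak => Fintype.sum_eq_zero _ fun l => ?_
  split_ifs with hal
  · rfl
  · rw [hA a hak, updateCol_comm _ hal, det_updateCol_zero]

theorem mixedDet_eq_add_of_col_eq_zero {G A C : Matrix n n R} {k l : n} (hkl : k ≠ l)
    (hA : ∀ a, a ≠ k → a ≠ l → A.col a = 0) (hC : ∀ a, a ≠ k → a ≠ l → C.col a = 0) :
    mixedDet G A C =
      ((G.updateCol k (A.col k)).updateCol l (C.col l)).det +
        ((G.updateCol k (C.col k)).updateCol l (A.col l)).det := by
  rw [updateCol_comm _ hkl (C.col k)]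
  refine sum_eq_add_of_mem (k, l) (l, k) (by simpa) (by simpa using hkl.symm)
    (by simpa using fun h => absurd h hkl) fun ⟨a, b⟩ hab hne => ?_
  have a_ne_b : a ≠ b := (mem_offDiag.mp hab).2.2
  by_cases ha : a ≠ k ∧ a ≠ l
  · rw [hA a ha.1 ha.2, updateCol_comm _ a_ne_b, det_updateCol_zero]
  · have b_ne : b ≠ k ∧ b ≠ l := by grind
    rw [hC b b_ne.1 b_ne.2, det_updateCol_zero]

end MixedDet

section Col

variable {m n R : Type*} [DecidableEq n]

theorem col_updateCol_self (M : Matrix m n R) (k : n) (c : m → R) : (M.updateCol k c).col k = c :=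
  funext fun _ => updateCol_self

theorem col_updateCol_ne {M : Matrix m n R} {k l : n} {c : m → R} (h : l ≠ k) :
    (M.updateCol k c).col l = M.col l :=
  funext fun _ => updateCol_ne h

end Col

section GramMatrix

variable {m n α β R : Type*}

/-- The Gram matrix of two families under a pairing `φ`; its determinant is the induced pairing of
the wedges of the two families. -/
def gramMatrix (φ : α → β → R) (v : m → α) (u : n → β) : Matrix m n R :=
  Matrix.of fun i j => φ (v i) (u j)

theorem gramMatrix_update_left [DecidableEq m] (φ : α → β → R) (v : m → α) (u : n → β) (i : m)
    (x : m → α) :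
    gramMatrix φ (Function.update v i (x i)) u =
      (gramMatrix φ v u).updateRow i ((gramMatrix φ x u).row i) := by
  ext a b
  obtain rfl | ha := eq_or_ne a i <;> simp [gramMatrix, *]

theorem gramMatrix_update_right [DecidableEq n] (φ : α → β → R) (v : m → α) (u : n → β) (k : n)
    (z : n → β) :
    gramMatrix φ v (Function.update u k (z k)) =
      (gramMatrix φ v u).updateCol k ((gramMatrix φ v z).col k) := by
  ext a b
  obtain rfl | hb := eq_or_ne b k <;> simp [gramMatrix, *]

variable [Fintype n] [DecidableEq n] [CommRing R] {φ : α → β → R} {v x y : n → α} {u z z' : n → β}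

theorem sum_det_gramMatrix_update_update (φ : α → β → R) (v x y : n → α) (u : n → β) :
    ∑ ij ∈ univ.offDiag, (gramMatrix φ
        (Function.update (Function.update v ij.1 (x ij.1)) ij.2 (y ij.2)) u).det =
      mixedDet (gramMatrix φ v u) (gramMatrix φ x u) (gramMatrix φ y u) := by
  simp only [gramMatrix_update_left, sum_det_updateRow_updateRow]

theorem sum_sum_det_gramMatrix_update_of_eq_zero (hx : ∀ i j, φ (x i) (u j) = 0) :
    ∑ k, ∑ ij ∈ univ.offDiag, (gramMatrix φ
        (Function.update (Function.update v ij.1 (x ij.1)) ij.2 (y ij.2))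
        (Function.update u k (z k))).det =
      mixedDet (gramMatrix φ v u) (gramMatrix φ x z) (gramMatrix φ y u) := by
  rw [mixedDet, sum_offDiag_univ_eq_sum_ite fun k l => (((gramMatrix φ v u).updateCol k
    ((gramMatrix φ x z).col k)).updateCol l ((gramMatrix φ y u).col l)).det]
  refine sum_congr rfl fun k _ => ?_
  rw [sum_det_gramMatrix_update_update, mixedDet_eq_sum_of_col_eq_zero (k := k)]
  · refine sum_congr rfl fun l _ => if_ctx_congr Iff.rfl (fun _ => rfl) fun hkl => ?_
    simp only [gramMatrix_update_right, updateCol_idem, col_updateCol_self,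
      col_updateCol_ne (Ne.symm hkl)]
  · intro a hak
    rw [gramMatrix_update_right, col_updateCol_ne hak]
    exact funext fun i => hx i a

theorem sum_sum_det_gramMatrix_update_update_of_eq_zero
    (hx : ∀ i j, φ (x i) (u j) = 0) (hy : ∀ i j, φ (y i) (u j) = 0) :
    ∑ kl ∈ univ.offDiag, ∑ ij ∈ univ.offDiag, (gramMatrix φ
        (Function.update (Function.update v ij.1 (x ij.1)) ij.2 (y ij.2))
        (Function.update (Function.update u kl.1 (z kl.1)) kl.2 (z' kl.2))).det =
      mixedDet (gramMatrix φ v u) (gramMatrix φ x z) (gramMatrix φ y z') +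
        mixedDet (gramMatrix φ v u) (gramMatrix φ x z') (gramMatrix φ y z) := by
  rw [mixedDet_comm _ (gramMatrix φ x z'), mixedDet, mixedDet, ← sum_add_distrib]
  refine sum_congr rfl fun ⟨k, l⟩ hkl => ?_
  have k_ne_l : k ≠ l := (mem_offDiag.mp hkl).2.2
  have col_eq_zero {s : n → α} (hs : ∀ i j, φ (s i) (u j) = 0) (a : n) (hak : a ≠ k)
      (hal : a ≠ l) :
      (gramMatrix φ s (Function.update (Function.update u k (z k)) l (z' l))).col a = 0 := by
    rw [gramMatrix_update_right, gramMatrix_update_right, col_updateCol_ne hal,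
      col_updateCol_ne hak]
    exact funext fun i => hs i a
  rw [sum_det_gramMatrix_update_update,
    mixedDet_eq_add_of_col_eq_zero k_ne_l (col_eq_zero hx) (col_eq_zero hy)]
  simp only [gramMatrix_update_right, updateCol_comm _ k_ne_l, updateCol_idem, col_updateCol_self,
    col_updateCol_ne k_ne_l.symm]

end GramMatrix

section InducedPairing

variable {R V W : Type*} [CommRing R] [AddCommGroup V] [Module R V] [AddCommGroup W] [Module R W]
  {m : ℕ}

variable (R) in
/-- `D_t (v 0 ∧ ⋯ ∧ v (m-1))`, as a function of the family `v` rather than of its wedge. -/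
noncomputable def wedgeDeriv (t : V → V) (v : Fin m → V) : ⋀[R]^m V :=
  ∑ i, wedge R m (Function.update v i (t (v i)))

variable (R) in
/-- `B(t, s) (v 0 ∧ ⋯ ∧ v (m-1))`, as a function of the family `v` rather than of its wedge; the
sum is over the ordered pairs of distinct slots. -/
noncomputable def wedgeBideriv (t s : V → V) (v : Fin m → V) : ⋀[R]^m V :=
  ∑ ij ∈ univ.offDiag,
    wedge R m (Function.update (Function.update v ij.1 (t (v ij.1))) ij.2 (s (v ij.2)))

theorem wedgeBideriv_eq_sum_ite (t s : V → V) (v : Fin m → V) :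
    wedgeBideriv R t s v = ∑ i, ∑ j, if i = j then 0 else
      wedge R m (Function.update (Function.update v i (t (v i))) j (s (v j))) :=
  sum_offDiag_univ_eq_sum_ite fun i j =>
    wedge R m (Function.update (Function.update v i (t (v i))) j (s (v j)))

variable {σ : R →+* R} {Φ : ⋀[R]^m V →ₗ[R] ⋀[R]^m W →ₛₗ[σ] R} {φ : V → W → R}
  {t s t₁s t₂ : V → V} {t₁ w : W → W} {v : Fin m → V} {u : Fin m → W}

theorem pairing_wedgeBideriv_wedgeDeriv
    (hΦ : ∀ (v : Fin m → V) (u : Fin m → W),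
      Φ (wedge R m v) (wedge R m u) = (gramMatrix φ v u).det)
    (ht : ∀ i j, φ (t (v i)) (u j) = 0) :
    Φ (wedgeBideriv R t s v) (wedgeDeriv R w u) =
      mixedDet (gramMatrix φ v u) (gramMatrix φ (t ∘ v) (w ∘ u)) (gramMatrix φ (s ∘ v) u) := by
  simp only [wedgeBideriv, wedgeDeriv, map_sum, LinearMap.sum_apply, hΦ]
  exact sum_sum_det_gramMatrix_update_of_eq_zero (v := v) (x := t ∘ v) (y := s ∘ v) (z := w ∘ u) ht

theorem pairing_wedgeBideriv_wedgeBideriv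
    (hΦ : ∀ (v : Fin m → V) (u : Fin m → W),
      Φ (wedge R m v) (wedge R m u) = (gramMatrix φ v u).det)
    (ht : ∀ i j, φ (t (v i)) (u j) = 0) (hs : ∀ i j, φ (s (v i)) (u j) = 0) :
    Φ (wedgeBideriv R t s v) (wedgeBideriv R t₁ w u) =
      mixedDet (gramMatrix φ v u) (gramMatrix φ (t ∘ v) (t₁ ∘ u)) (gramMatrix φ (s ∘ v) (w ∘ u)) +
        mixedDet (gramMatrix φ v u) (gramMatrix φ (t ∘ v) (w ∘ u))
          (gramMatrix φ (s ∘ v) (t₁ ∘ u)) := by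
  simp only [wedgeBideriv, map_sum, LinearMap.sum_apply, hΦ]
  exact sum_sum_det_gramMatrix_update_update_of_eq_zero (v := v) (x := t ∘ v) (y := s ∘ v)
    (z := t₁ ∘ u) (z' := w ∘ u) ht hs

theorem statement13_general
    (hΦ : ∀ (v : Fin m → V) (u : Fin m → W),
      Φ (wedge R m v) (wedge R m u) = (gramMatrix φ v u).det)
    (hadj₁ : ∀ x y, φ (t₁s x) y = φ x (t₁ y))
    (ht : ∀ i j, φ (t (v i)) (u j) = 0) (ht₂ : ∀ i j, φ (t₂ (v i)) (u j) = 0) :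
    Φ (wedgeBideriv R t (t₁s ∘ t₂) v + wedgeBideriv R t₂ (t₁s ∘ t) v) (wedgeDeriv R w u) =
      Φ (wedgeBideriv R t₂ t v) (wedgeBideriv R t₁ w u) := by
  have gram_adjoint (r : V → V) :
      gramMatrix φ ((t₁s ∘ r) ∘ v) u = gramMatrix φ (r ∘ v) (t₁ ∘ u) := by
    ext i j
    exact hadj₁ (r (v i)) (u j)
  rw [map_add, LinearMap.add_apply, pairing_wedgeBideriv_wedgeDeriv hΦ ht,
    pairing_wedgeBideriv_wedgeDeriv hΦ ht₂, pairing_wedgeBideriv_wedgeBideriv hΦ ht₂ ht,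
    gram_adjoint, gram_adjoint, mixedDet_comm _ (gramMatrix φ (t ∘ v) (w ∘ u))]

end InducedPairing

/-- simplified Gauss equation for the `m`-Plücker embedding: for tangent
vectors `w, t, t₁, t₂` at a nondegenerate subspace `p` and all `p₁,…,p_m, p'₁,…,p'_m ∈ p`,
`⟨B(t, t₁*∘t₂)(p₁∧⋯∧p_m) + B(t₂, t₁*∘t)(p₁∧⋯∧p_m), D_w(p'₁∧⋯∧p'_m)⟩ =
  ⟨B(t₂, t)(p₁∧⋯∧p_m), B(t₁, w)(p'₁∧⋯∧p'_m)⟩`. -/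
theorem statement13 {𝕜 : Type*} [RCLike 𝕜] {V : Type*} [AddCommGroup V] [Module 𝕜 V]
    [FiniteDimensional 𝕜 V]
    (φ : V →ₗ[𝕜] V →ₛₗ[starRingEnd 𝕜] 𝕜)
    (hherm : ∀ x y : V, φ x y = starRingEnd 𝕜 (φ y x))
    (hnd : ∀ x : V, (∀ y : V, φ x y = 0) → x = 0)
    (p : Submodule 𝕜 V)
    (hpnd : ∀ x ∈ p, (∀ y ∈ p, φ x y = 0) → x = 0)
    (m : ℕ)
    (Φ : ⋀[𝕜]^m V →ₗ[𝕜] ⋀[𝕜]^m V →ₛₗ[starRingEnd 𝕜] 𝕜)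
    (hΦ : ∀ v u : Fin m → V,
      Φ (wedge 𝕜 m v) (wedge 𝕜 m u) = (Matrix.of fun i j => φ (v i) (u j)).det)
    (w t t₁ t₂ t₁s : V →ₗ[𝕜] V)
    -- `w`, `t`, `t₁`, `t₂` are tangent vectors at `p`: they map `p` into `p^⊥`, kill `p^⊥`
    (hwp : ∀ x ∈ p, ∀ y ∈ p, φ (w x) y = 0)
    (hwperp : ∀ x : V, (∀ y ∈ p, φ x y = 0) → w x = 0)
    (htp : ∀ x ∈ p, ∀ y ∈ p, φ (t x) y = 0)
    (htperp : ∀ x : V, (∀ y ∈ p, φ x y = 0) → t x = 0)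
    (ht₁p : ∀ x ∈ p, ∀ y ∈ p, φ (t₁ x) y = 0)
    (ht₁perp : ∀ x : V, (∀ y ∈ p, φ x y = 0) → t₁ x = 0)
    (ht₂p : ∀ x ∈ p, ∀ y ∈ p, φ (t₂ x) y = 0)
    (ht₂perp : ∀ x : V, (∀ y ∈ p, φ x y = 0) → t₂ x = 0)
    (hadj₁ : ∀ v u : V, φ (t₁ v) u = φ v (t₁s u))
    (Dw Ba Bb Bc Bd : ⋀[𝕜]^m V →ₗ[𝕜] ⋀[𝕜]^m V)
    (hDw : ∀ v : Fin m → V,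
      Dw (wedge 𝕜 m v) = ∑ i, wedge 𝕜 m (Function.update v i (w (v i))))
    -- `Ba = B(t, t₁*∘t₂)`
    (hBa : ∀ v : Fin m → V,
      Ba (wedge 𝕜 m v) = ∑ i, ∑ j, if i = j then 0 else
        wedge 𝕜 m (Function.update (Function.update v i (t (v i))) j (t₁s (t₂ (v j)))))
    -- `Bb = B(t₂, t₁*∘t)`
    (hBb : ∀ v : Fin m → V,
      Bb (wedge 𝕜 m v) = ∑ i, ∑ j, if i = j then 0 else
        wedge 𝕜 m (Function.update (Function.update v i (t₂ (v i))) j (t₁s (t (v j)))))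
    -- `Bc = B(t₂, t)`
    (hBc : ∀ v : Fin m → V,
      Bc (wedge 𝕜 m v) = ∑ i, ∑ j, if i = j then 0 else
        wedge 𝕜 m (Function.update (Function.update v i (t₂ (v i))) j (t (v j))))
    -- `Bd = B(t₁, w)`
    (hBd : ∀ v : Fin m → V,
      Bd (wedge 𝕜 m v) = ∑ i, ∑ j, if i = j then 0 else
        wedge 𝕜 m (Function.update (Function.update v i (t₁ (v i))) j (w (v j)))) :
    ∀ pv pv' : Fin m → V, (∀ i, pv i ∈ p) → (∀ i, pv' i ∈ p) →
      Φ (Ba (wedge 𝕜 m pv) + Bb (wedge 𝕜 m pv)) (Dw (wedge 𝕜 m pv')) =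
        Φ (Bc (wedge 𝕜 m pv)) (Bd (wedge 𝕜 m pv')) := by
  intro pv pv' hpv hpv'
  have adjoint_left (x y : V) : φ (t₁s x) y = φ x (t₁ y) := by
    rw [hherm, ← hadj₁, ← hherm]
  simpa only [wedgeBideriv_eq_sum_ite, wedgeDeriv, Function.comp_apply, ← hBa, ← hBb, ← hBc, ← hBd,
    ← hDw] using statement13_general (φ := fun x y => φ x y) (t := t) (t₂ := t₂) (t₁ := t₁) (w := w)
      hΦ adjoint_left (fun i j => htp _ (hpv i) _ (hpv' j)) fun i j => ht₂p _ (hpv i) _ (hpv' j)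
end

section
/- If t : V → V is a linear map of rank at most one, then B(t,t) = 0 as a linear endomorphism of ⋀^m V, for every m. (This vanishing, applied to the rank-one tangent vectors t_{ij} sending one basis vector of p to a basis vector of p^⊥, is the content of the minimality of the m-Plücker embedding: the second fundamental form B has vanishing trace.) -/
theorem alternatingMap_update_update_eq_zero_of_mem_span_singleton {R M N ι : Type*} [Semiring R]
    [AddCommMonoid M] [Module R M] [AddCommMonoid N] [Module R N] [DecidableEq ι]
    (f : M [⋀^ι]→ₗ[R] N) (v : ι → M) {i j : ι} (hij : i ≠ j) {w x y : M}
    (hx : x ∈ Submodule.span R {w}) (hy : y ∈ Submodule.span R {w}) :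
    f (Function.update (Function.update v i x) j y) = 0 := by
  obtain ⟨a, rfl⟩ := Submodule.mem_span_singleton.1 hx
  obtain ⟨b, rfl⟩ := Submodule.mem_span_singleton.1 hy
  rw [f.map_update_smul, Function.update_comm hij, f.map_update_smul,
    f.map_update_update v hij.symm, smul_zero, smul_zero]

section Wedge

variable {R V : Type*} [CommRing R] [AddCommGroup V] [Module R V]

theorem wedge_eq_ιMulti (m : ℕ) (v : Fin m → V) : wedge R m v = exteriorPower.ιMulti R m v :=
  rfl

theorem linearMap_ext_wedge {N : Type*} [AddCommGroup N] [Module R N] {m : ℕ}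
    {f g : ⋀[R]^m V →ₗ[R] N} (h : ∀ v : Fin m → V, f (wedge R m v) = g (wedge R m v)) : f = g :=
  exteriorPower.linearMap_ext (AlternatingMap.ext h)

theorem statement14_general (m : ℕ) (t : V →ₗ[R] V) {w : V}
    (ht : LinearMap.range t ≤ Submodule.span R {w}) (B : ⋀[R]^m V →ₗ[R] ⋀[R]^m V)
    (hB : ∀ v : Fin m → V,
      B (wedge R m v) = ∑ i, ∑ j, if i = j then 0 else
        wedge R m (Function.update (Function.update v i (t (v i))) j (t (v j)))) :
    B = 0 := by
  have image_mem (x : V) : t x ∈ Submodule.span R {w} := ht (LinearMap.mem_range_self t x)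
  refine linearMap_ext_wedge fun v ↦ ?_
  rw [hB, LinearMap.zero_apply]
  refine Finset.sum_eq_zero fun i _ ↦ Finset.sum_eq_zero fun j _ ↦ ?_
  split_ifs with hij
  · rfl
  · rw [wedge_eq_ιMulti]
    exact alternatingMap_update_update_eq_zero_of_mem_span_singleton _ v hij
      (image_mem (v i)) (image_mem (v j))

end Wedge

/-- if `t : V → V` is a linear map of rank at most one, then `B(t,t) = 0` as a
linear endomorphism of `⋀^m V`, for every `m` (minimality of the `m`-Plücker embedding). -/
theorem statement14 {K : Type*} [Field K] {V : Type*} [AddCommGroup V] [Module K V]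
    (m : ℕ) (t : V →ₗ[K] V) (hrank : LinearMap.rank t ≤ 1)
    (B : ⋀[K]^m V →ₗ[K] ⋀[K]^m V)
    (hB : ∀ v : Fin m → V,
      B (wedge K m v) = ∑ i, ∑ j, if i = j then 0 else
        wedge K m (Function.update (Function.update v i (t (v i))) j (t (v j)))) :
    B = 0 := by
  obtain ⟨w, hw⟩ := (rank_submodule_le_one_iff' (LinearMap.range t)).1 hrank
  exact statement14_general m t hw B hB
end

section
/- Let p and q be finite-dimensional complex vector spaces with nondegenerate hermitian forms, dim_ℂ p = k, dim_ℂ q = n − k (so n = dim_ℂ p + dim_ℂ q). For all ℂ-linear maps t, t₁ : p → q, the map t₂ ↦ t∘t₁*∘t₂ + t₂∘t₁*∘t − t∘t₂*∘t₁ − t₁∘t₂*∘t is an ℝ-linear endomorphism of Hom_ℂ(p,q) (the last two terms are conjugate-linear in t₂), and its trace as an ℝ-linear endomorphism of the underlying real vector space of Hom_ℂ(p,q) equals 2n·Re(tr(t₁*∘t)). (This is the algebraic content of the statement that Gr⁰_ℂ(k,V) is Einstein with constant 2n.) -/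
/-!
Write `{x, y, z} = x ∘ y ∘ z + z ∘ y ∘ x`. The endomorphism in question is
`t₂ ↦ {t, t₁*, t₂} - {t, t₂*, t₁}`. Its first part is complex linear, the sum of composition with
`t ∘ t₁*` on the left and with `t₁* ∘ t` on the right, so that its complex trace is
`(dim q + dim p) tr (t₁* ∘ t)`; passing to the real trace doubles the real part. Its second part is
conjugate linear, so it anticommutes with multiplication by `i`: it is conjugate to its own negative
and has real trace zero.
-/

section Trace

open LinearMap Module
open scoped TensorProduct

theorem trace_restrictScalars {R S M : Type*} [CommRing R] [CommRing S] [Algebra R S]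
    [Free R S] [Module.Finite R S] [AddCommGroup M] [Module R M] [Module S M] [IsScalarTower R S M]
    [Free S M] [Module.Finite S M] (f : M →ₗ[S] M) :
    trace R M (f.restrictScalars R) = Algebra.trace R S (trace S M f) := by
  classical
  let b := Free.chooseBasis R S
  let c := Free.chooseBasis S M
  rw [trace_eq_matrix_trace R (b.smulTower' c), trace_eq_matrix_trace S c,
    restrictScalars_toMatrix, Algebra.trace_eq_matrix_trace b]
  simp only [Matrix.trace, Matrix.diag, Fintype.sum_prod_type, Matrix.comp_apply, Matrix.map_apply,
    map_sum, Matrix.sum_apply]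
  exact Finset.sum_comm

theorem trace_restrictScalars_real {V : Type*} [AddCommGroup V] [Module ℂ V]
    [FiniteDimensional ℂ V] (f : V →ₗ[ℂ] V) :
    trace ℝ V (f.restrictScalars ℝ) = 2 * (trace ℂ V f).re := by
  rw [trace_restrictScalars, Algebra.trace_complex_apply]

theorem trace_eq_zero_of_semiconjBy_neg {R M : Type*} [CommRing R] [IsAddTorsionFree R]
    [AddCommGroup M] [Module R M] {u : (End R M)ˣ} {f : End R M}
    (h : SemiconjBy (u : End R M) f (-f)) : trace R M f = 0 := by
  refine self_eq_neg.mp ?_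
  calc trace R M f = trace R M (u * f * ↑u⁻¹) := (trace_conj ..).symm
    _ = trace R M (-f) := by rw [h.eq, Units.mul_inv_cancel_right]
    _ = -trace R M f := map_neg _ _

section Hom

variable {R M N : Type*} [CommRing R] [AddCommGroup M] [Module R M] [Free R M] [Module.Finite R M]
  [AddCommGroup N] [Module R N] [Free R N] [Module.Finite R N]

theorem trace_compRight (f : N →ₗ[R] N) :
    trace R (M →ₗ[R] N) (f.compRight R) = finrank R M * trace R N f := by
  have compRight_eq_conj : f.compRight R = (dualTensorHomEquiv R M N).conj (f.lTensor _) := by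
    rw [LinearEquiv.conj_apply, LinearEquiv.eq_comp_toLinearMap_symm]
    exact (dualTensorHom_comp_lTensor f).symm
  have trace_id_dual : trace R (Dual R M) LinearMap.id = finrank R M :=
    (trace_transpose' LinearMap.id).trans (trace_id R M)
  rw [compRight_eq_conj, trace_conj' (M := Dual R M ⊗[R] N), lTensor,
    trace_tensorProduct', trace_id_dual]

theorem trace_lcomp (f : M →ₗ[R] M) :
    trace R (M →ₗ[R] N) (f.lcomp R N) = finrank R N * trace R M f := by
  have lcomp_eq_conj : f.lcomp R N = (dualTensorHomEquiv R M N).conj (f.dualMap.rTensor _) := by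
    rw [LinearEquiv.conj_apply, LinearEquiv.eq_comp_toLinearMap_symm]
    exact (dualTensorHom_comp_rTensor_dualMap f).symm
  have trace_dualMap : trace R (Dual R M) f.dualMap = trace R M f := trace_transpose' f
  rw [lcomp_eq_conj, trace_conj' (M := Dual R M ⊗[R] N), rTensor,
    trace_tensorProduct', trace_dualMap, trace_id, mul_comm]

end Hom

end Trace

section ConjugateLinear

variable {V W : Type*} [AddCommGroup V] [Module ℂ V] [AddCommGroup W] [Module ℂ W]

/-- A conjugate-linear map between complex vector spaces, viewed as a real-linear map between the
underlying real vector spaces. -/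
def conjLinearToReal (f : V →ₛₗ[starRingEnd ℂ] W) : V →ₗ[ℝ] W where
  toFun := f
  map_add' := map_add f
  map_smul' r v := by
    rw [← Complex.coe_smul, map_smulₛₗ, Complex.conj_ofReal, Complex.coe_smul, RingHom.id_apply]

@[simp]
theorem conjLinearToReal_apply (f : V →ₛₗ[starRingEnd ℂ] W) (v : V) : conjLinearToReal f v = f v :=
  rfl

theorem trace_conjLinearToReal (f : V →ₛₗ[starRingEnd ℂ] V) :
    LinearMap.trace ℝ V (conjLinearToReal f) = 0 := by
  let J : (Module.End ℝ V)ˣ :=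
    Units.map (Algebra.lsmul ℝ ℝ V : ℂ →ₐ[ℝ] Module.End ℝ V) (Units.mk0 Complex.I Complex.I_ne_zero)
  refine trace_eq_zero_of_semiconjBy_neg (u := J) (LinearMap.ext fun v => ?_)
  have anticomm : Complex.I • f v = -f (Complex.I • v) := by
    rw [map_smulₛₗ, Complex.conj_I, neg_smul, neg_neg]
  exact anticomm

end ConjugateLinear

section Adjoint

open LinearMap

variable {R M N L : Type*} [CommRing R] [StarRing R] [AddCommGroup M] [Module R M]
  [AddCommGroup N] [Module R N] [AddCommGroup L] [Module R L]
  {B : M →ₗ[R] M →ₛₗ[starRingEnd R] L} {C : N →ₗ[R] N →ₛₗ[starRingEnd R] L}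

theorem eq_of_isAdjointPair (hB : B.SeparatingRight) {s : M → N} {g g' : N → M}
    (h : IsAdjointPair B C s g) (h' : IsAdjointPair B C s g') : g = g' := by
  funext y
  refine sub_eq_zero.mp (hB _ fun x => ?_)
  rw [map_sub, ← h, ← h', sub_self]

theorem isAdjointPair_smul_star (c : R) {s : M → N} {g : N → M} (h : IsAdjointPair B C s g) :
    IsAdjointPair B C (c • s) (star c • g) := fun x y => by
  simp [h x y, starRingEnd_apply]

/-- The adjoint `s ↦ s*` with respect to `B` and `C`, bundled as a conjugate-linear map. The choice
`adj` of adjoints is data, since adjoints with respect to general `B` and `C` need not exist. -/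
def conjLinearAdjoint (hB : B.SeparatingRight) (adj : (M →ₗ[R] N) → (N →ₗ[R] M))
    (hadj : ∀ s : M →ₗ[R] N, IsAdjointPair B C s (adj s)) :
    (M →ₗ[R] N) →ₛₗ[starRingEnd R] (N →ₗ[R] M) where
  toFun := adj
  map_add' s s' :=
    DFunLike.coe_injective <| eq_of_isAdjointPair hB (hadj (s + s')) ((hadj s).add (hadj s'))
  map_smul' c s :=
    DFunLike.coe_injective <|
      eq_of_isAdjointPair hB (hadj (c • s)) (isAdjointPair_smul_star c (hadj s))

end Adjoint

section JordanPair

variable {R M N : Type*} [CommRing R] [AddCommGroup M] [Module R M] [AddCommGroup N] [Module R N]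

/-- The triple product `{x, y, z} = x ∘ y ∘ z + z ∘ y ∘ x` of the Jordan pair
`(Hom(M, N), Hom(N, M))`, with `{x, y, ·}` as the value at `x` and `y`. -/
def jordanTriple :
    (M →ₗ[R] N) →ₗ[R] (N →ₗ[R] M) →ₗ[R] (M →ₗ[R] N) →ₗ[R] (M →ₗ[R] N) :=
  LinearMap.mk₂ R (fun x y => (x ∘ₗ y).compRight R + (y ∘ₗ x).lcomp R N)
    (fun x x' y => by
      ext
      simp only [LinearMap.add_apply, LinearMap.compRight_apply, LinearMap.lcomp_apply,
        LinearMap.comp_apply, map_add]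
      abel)
    (fun c x y => by ext; simp)
    (fun x y y' => by
      ext
      simp only [LinearMap.add_apply, LinearMap.compRight_apply, LinearMap.lcomp_apply,
        LinearMap.comp_apply, map_add]
      abel)
    (fun c x y => by ext; simp)

theorem jordanTriple_apply (x z : M →ₗ[R] N) (y : N →ₗ[R] M) :
    jordanTriple x y z = x ∘ₗ y ∘ₗ z + z ∘ₗ y ∘ₗ x :=
  rfl

theorem trace_jordanTriple [Module.Free R M] [Module.Finite R M] [Module.Free R N]
    [Module.Finite R N] (x : M →ₗ[R] N) (y : N →ₗ[R] M) :
    LinearMap.trace R (M →ₗ[R] N) (jordanTriple x y) =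
      (Module.finrank R M + Module.finrank R N) * LinearMap.trace R M (y ∘ₗ x) := by
  rw [jordanTriple, LinearMap.mk₂_apply, map_add, trace_compRight, trace_lcomp,
    LinearMap.trace_comp_comm' x y, add_mul]

end JordanPair

theorem statement16_general {P Q : Type*}
    [AddCommGroup P] [Module ℂ P] [FiniteDimensional ℂ P]
    [AddCommGroup Q] [Module ℂ Q] [FiniteDimensional ℂ Q]
    (σ : (P →ₗ[ℂ] Q) →ₛₗ[starRingEnd ℂ] (Q →ₗ[ℂ] P)) (t t₁ : P →ₗ[ℂ] Q) :
    ∃ F : (P →ₗ[ℂ] Q) →ₗ[ℝ] (P →ₗ[ℂ] Q),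
      (∀ t₂ : P →ₗ[ℂ] Q,
        F t₂ = t ∘ₗ σ t₁ ∘ₗ t₂ + t₂ ∘ₗ σ t₁ ∘ₗ t - t ∘ₗ σ t₂ ∘ₗ t₁ - t₁ ∘ₗ σ t₂ ∘ₗ t) ∧
      LinearMap.trace ℝ (P →ₗ[ℂ] Q) F =
        2 * ((Module.finrank ℂ P + Module.finrank ℂ Q : ℕ) : ℝ) *
          (LinearMap.trace ℂ P (σ t₁ ∘ₗ t)).re := by
  refine ⟨(jordanTriple t (σ t₁)).restrictScalars ℝ -
    conjLinearToReal ((jordanTriple t).flip t₁ ∘ₛₗ σ), fun t₂ => ?_, ?_⟩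
  · simp only [LinearMap.sub_apply, LinearMap.restrictScalars_apply, conjLinearToReal_apply,
      LinearMap.comp_apply, LinearMap.flip_apply, jordanTriple_apply, sub_sub]
  · rw [map_sub, trace_conjLinearToReal, sub_zero, trace_restrictScalars_real, trace_jordanTriple,
      ← Nat.cast_add, ← Complex.ofReal_natCast, Complex.re_ofReal_mul, mul_assoc]

/-- (`Gr⁰_ℂ(k,V)` is Einstein with constant `2n`.) Let `p` and `q` be
finite-dimensional complex vector spaces with nondegenerate hermitian forms,
`dim_ℂ p = k`, `dim_ℂ q = n − k` (so `n = dim_ℂ p + dim_ℂ q`). For all `ℂ`-linear maps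
`t, t₁ : p → q`, the map `t₂ ↦ t∘t₁*∘t₂ + t₂∘t₁*∘t − t∘t₂*∘t₁ − t₁∘t₂*∘t` is an `ℝ`-linear
endomorphism of `Hom_ℂ(p,q)` and its trace as an `ℝ`-linear endomorphism of the underlying
real vector space equals `2n·Re(tr(t₁*∘t))`. -/
theorem statement16 {P Q : Type*}
    [AddCommGroup P] [Module ℂ P] [FiniteDimensional ℂ P]
    [AddCommGroup Q] [Module ℂ Q] [FiniteDimensional ℂ Q]
    (φp : P →ₗ[ℂ] P →ₛₗ[starRingEnd ℂ] ℂ) (φq : Q →ₗ[ℂ] Q →ₛₗ[starRingEnd ℂ] ℂ)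
    (hpherm : ∀ x y : P, φp x y = starRingEnd ℂ (φp y x))
    (hqherm : ∀ x y : Q, φq x y = starRingEnd ℂ (φq y x))
    (hpnd : ∀ x : P, (∀ y : P, φp x y = 0) → x = 0)
    (hqnd : ∀ x : Q, (∀ y : Q, φq x y = 0) → x = 0)
    (k n : ℕ) (hk : Module.finrank ℂ P = k)
    (hn : Module.finrank ℂ P + Module.finrank ℂ Q = n)
    -- `adj s` is the adjoint `s*` of `s : P → Q` with respect to the two forms
    (adj : (P →ₗ[ℂ] Q) → (Q →ₗ[ℂ] P))
    (hadj : ∀ (s : P →ₗ[ℂ] Q) (x : P) (y : Q), φq (s x) y = φp x (adj s y))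
    (t t₁ : P →ₗ[ℂ] Q) :
    ∃ F : (P →ₗ[ℂ] Q) →ₗ[ℝ] (P →ₗ[ℂ] Q),
      (∀ t₂ : P →ₗ[ℂ] Q,
        F t₂ = t ∘ₗ adj t₁ ∘ₗ t₂ + t₂ ∘ₗ adj t₁ ∘ₗ t - t ∘ₗ adj t₂ ∘ₗ t₁ - t₁ ∘ₗ adj t₂ ∘ₗ t) ∧
      LinearMap.trace ℝ (P →ₗ[ℂ] Q) F =
        2 * (n : ℝ) * (LinearMap.trace ℂ P (adj t₁ ∘ₗ t)).re := by
  subst hn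
  have hsep : φp.SeparatingRight := fun y hy => hpnd y fun x => by rw [hpherm, hy, map_zero]
  exact statement16_general (conjLinearAdjoint hsep adj hadj) t t₁
end
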